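/- For every timed automaton A there exists a diagonal-free timed automaton A_df (over the same clock set) such that there is a bijection between the runs of A and the runs of A_df that maps accepting runs to accepting runs (so A has an accepting run iff A_df does), and the number of states of A_df is 2^d · n, where d is the number of distinct diagonal constraints occurring in the guards of A and n is the number of states of A. -/

import Mathlib

open scoped NNReal

/-! ## Atomic constraints over a set of clocks -/

/-- Comparison operator `◁ ∈ {<, ≤}`. -/
inductive Ineq : Type where
  | lt : Ineq
  | le : Ineq
deriving DecidableEq

/-- Interpretation of a comparison operator on reals. -/
def Ineq.holds : Ineq → ℝ → ℝ → Prop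
  | .lt, a, b => a < b
  | .le, a, b => a ≤ b

/-- Atomic constraints over clocks `X`:
`upper x o c` is `x ◁ c` (c ∈ ℕ), `lower c o x` is `c ◁ x` (c ∈ ℕ),
`diag x y o d` is `x - y ◁ d` (d ∈ ℤ). -/
inductive Constr (X : Type) : Type where
  | upper : X → Ineq → ℕ → Constr X
  | lower : ℕ → Ineq → X → Constr X
  | diag : X → X → Ineq → ℤ → Constr X
deriving DecidableEq

namespace Constr

/-- Is the constraint a diagonal constraint `x - y ◁ d`? -/
def isDiag {X : Type} : Constr X → Bool
  | .diag _ _ _ _ => true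
  | _ => false

/-- The integer constant of a constraint. -/
def constOf {X : Type} : Constr X → ℤ
  | .upper _ _ c => (c : ℤ)
  | .lower c _ _ => (c : ℤ)
  | .diag _ _ _ d => d

/-- Satisfaction of a constraint by a clock valuation `v : X → ℝ≥0`. -/
def sat {X : Type} (v : X → ℝ≥0) : Constr X → Prop
  | .upper x o c => o.holds (v x : ℝ) (c : ℝ)
  | .lower c o x => o.holds (c : ℝ) (v x : ℝ)
  | .diag x y o d => o.holds ((v x : ℝ) - (v y : ℝ)) (d : ℝ)

end Constr

/-- Time elapse: `v + δ`. -/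
def shift {X : Type} (v : X → ℝ≥0) (δ : ℝ≥0) : X → ℝ≥0 := fun x => v x + δ

/-- The relation `v ⊑_G v'`: for all `φ ∈ G` and all delays `δ ≥ 0`,
`v + δ ⊨ φ` implies `v' + δ ⊨ φ`. -/
def simG {X : Type} (G : Set (Constr X)) (v v' : X → ℝ≥0) : Prop :=
  ∀ φ ∈ G, ∀ δ : ℝ≥0, Constr.sat (shift v δ) φ → Constr.sat (shift v' δ) φ

/-- `Z ⊑_G Z'` on sets of valuations. -/
def simGZ {X : Type} (G : Set (Constr X)) (Z Z' : Set (X → ℝ≥0)) : Prop :=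
  ∀ v ∈ Z, ∃ v' ∈ Z', simG G v v'

open Classical in
/-- `[R]v`: reset the clocks in `R` to `0`. -/
noncomputable def reset {X : Type} (R : Set X) (v : X → ℝ≥0) : X → ℝ≥0 :=
  fun x => if x ∈ R then 0 else v x

/-- Weakest precondition `wp(⊑_φ, R)` of a single constraint over a reset. -/
def wpReset {X : Type} (R : Set X) : Constr X → Set (Constr X)
  | .upper x o c => {ψ | x ∉ R ∧ ψ = .upper x o c}
  | .lower c o x => {ψ | x ∉ R ∧ ψ = .lower c o x}
  | .diag x y o d =>
      {ψ | (x ∉ R ∧ y ∉ R ∧ ψ = .diag x y o d) ∨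
           (x ∉ R ∧ y ∈ R ∧ 0 ≤ d ∧ ψ = .upper x o d.toNat) ∨
           (x ∈ R ∧ y ∉ R ∧ 0 ≤ -d ∧ ψ = .lower (-d).toNat o y)}

/-- Weakest precondition `wp(⊑_G, R)` of a set of constraints over a reset. -/
def wpResetSet {X : Type} (R : Set X) (G : Set (Constr X)) : Set (Constr X) :=
  ⋃ φ ∈ G, wpReset R φ

/-! ## Timed automata -/

/-- A transition: source state, guard (finite conjunction of constraints),
reset set, target state. -/
abbrev TTrans (Q X : Type) : Type := Q × Finset (Constr X) × Set X × Q

def TTrans.src {Q X : Type} (t : TTrans Q X) : Q := t.1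
def TTrans.grd {Q X : Type} (t : TTrans Q X) : Finset (Constr X) := t.2.1
def TTrans.rst {Q X : Type} (t : TTrans Q X) : Set X := t.2.2.1
def TTrans.tgt {Q X : Type} (t : TTrans Q X) : Q := t.2.2.2

/-- A timed automaton. -/
structure TA (Q X : Type) : Type where
  init : Q
  trans : Finset (TTrans Q X)
  acc : Set Q

/-- Action step of a timed automaton along transition `t`. -/
def Step {Q X : Type} (A : TA Q X) (t : TTrans Q X) (c c' : Q × (X → ℝ≥0)) : Prop :=
  t ∈ A.trans ∧ TTrans.src t = c.1 ∧ (∀ φ ∈ TTrans.grd t, Constr.sat c.2 φ) ∧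
    c'.1 = TTrans.tgt t ∧ c'.2 = reset (TTrans.rst t) c.2

/-- `r` is a simulation on the configurations of `A`: a reflexive transitive
relation, relating only configurations with equal states, compatible with
delays and action transitions. -/
def IsSimulation {Q X : Type} (A : TA Q X)
    (r : (Q × (X → ℝ≥0)) → (Q × (X → ℝ≥0)) → Prop) : Prop :=
  Reflexive r ∧ Transitive r ∧
  ∀ q v q' v', r (q, v) (q', v') →
    q = q' ∧
    (∀ δ : ℝ≥0, ∃ δ' : ℝ≥0, r (q, shift v δ) (q, shift v' δ')) ∧
    (∀ t c₁, Step A t (q, v) c₁ →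
      ∃ v₁', Step A t (q, v') (c₁.1, v₁') ∧ r c₁ (c₁.1, v₁'))

/-- The state-based guard equations:
`G(q) = ⋃_{(q,g,R,q₁) ∈ T} ({g} ∪ wp(⊑_{G(q₁)}, R))`. -/
def GuardEq {Q X : Type} (A : TA Q X) (G : Q → Set (Constr X)) : Prop :=
  ∀ q, G q = ⋃ t ∈ A.trans, ⋃ (_ : TTrans.src t = q),
    ((TTrans.grd t : Set (Constr X)) ∪ wpResetSet (TTrans.rst t) (G (TTrans.tgt t)))

/-! ## LU bounds -/

def lowerConstAt {X : Type} [DecidableEq X] (x : X) : Constr X → WithBot ℕ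
  | .lower c _ y => if y = x then (c : WithBot ℕ) else ⊥
  | _ => ⊥

def upperConstAt {X : Type} [DecidableEq X] (x : X) : Constr X → WithBot ℕ
  | .upper y _ c => if y = x then (c : WithBot ℕ) else ⊥
  | _ => ⊥

/-- `L_G(x)`: maximum constant among lower-bound constraints `c ◁ x` in `G`
(`⊥ = -∞` if none). -/
def Lbound {X : Type} [DecidableEq X] (G : Finset (Constr X)) (x : X) : WithBot ℕ :=
  G.sup (lowerConstAt x)

/-- `U_G(x)`: maximum constant among upper-bound constraints `x ◁ c` in `G`
(`⊥ = -∞` if none). -/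
def Ubound {X : Type} [DecidableEq X] (G : Finset (Constr X)) (x : X) : WithBot ℕ :=
  G.sup (upperConstAt x)

/-- The LU simulation `v ≼_LU v'` for bounds functions `L U : X → ℕ ∪ {-∞}`. -/
def luSim {X : Type} (L U : X → WithBot ℕ) (v v' : X → ℝ≥0) : Prop :=
  ∀ x : X,
    (v' x < v x → (L x).map (fun c : ℕ => (c : ℝ)) < ((v' x : ℝ) : WithBot ℝ)) ∧
    (v x < v' x → (U x).map (fun c : ℕ => (c : ℝ)) < ((v x : ℝ) : WithBot ℝ))

/-- The relation `v ⊑^LU_G v'`: `v ≼_{LU(G)} v'` and every diagonal constraint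
of `G` satisfied by `v` is satisfied by `v'`. -/
def luglu {X : Type} [DecidableEq X] (G : Finset (Constr X)) (v v' : X → ℝ≥0) : Prop :=
  luSim (Lbound G) (Ubound G) v v' ∧
    ∀ φ ∈ G, φ.isDiag → Constr.sat v φ → Constr.sat v' φ

/-- Lifting a relation on valuations to sets of valuations. -/
def zoneRel {X : Type} (r : (X → ℝ≥0) → (X → ℝ≥0) → Prop) (Z Z' : Set (X → ℝ≥0)) : Prop :=
  ∀ v ∈ Z, ∃ v' ∈ Z', r v v'

/-! ## Runs of timed automata -/

/-- `stepsFrom A c l`: the alternating delay-action sequence `l` is a valid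
sequence of steps of `A` starting at configuration `c`. -/
def stepsFrom {Q X : Type} (A : TA Q X) :
    (Q × (X → ℝ≥0)) → List (ℝ≥0 × TTrans Q X) → Prop
  | _, [] => True
  | c, (δ, t) :: l =>
      t ∈ A.trans ∧ TTrans.src t = c.1 ∧
      (∀ φ ∈ TTrans.grd t, Constr.sat (shift c.2 δ) φ) ∧
      stepsFrom A (TTrans.tgt t, reset (TTrans.rst t) (shift c.2 δ)) l

/-- Configuration reached after a sequence of delay-action steps. -/
noncomputable def endConfig {Q X : Type} :
    (Q × (X → ℝ≥0)) → List (ℝ≥0 × TTrans Q X) → (Q × (X → ℝ≥0))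
  | c, [] => c
  | c, (δ, t) :: l => endConfig (TTrans.tgt t, reset (TTrans.rst t) (shift c.2 δ)) l

/-- A run of `A`: a valid sequence of delay-action steps from `(q₀, 0̄)`. -/
def TA.Run {Q X : Type} (A : TA Q X) : Type :=
  {l : List (ℝ≥0 × TTrans Q X) // stepsFrom A (A.init, fun _ => 0) l}

/-- A run is accepting if it ends in an accepting state. -/
def TA.Accepting {Q X : Type} (A : TA Q X) (r : A.Run) : Prop :=
  (endConfig (A.init, fun _ => 0) r.val).1 ∈ A.acc

/-- `A` is diagonal-free: no guard contains a diagonal constraint. -/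
def DiagFree {Q X : Type} (A : TA Q X) : Prop :=
  ∀ t ∈ A.trans, ∀ φ ∈ TTrans.grd t, ¬ φ.isDiag

/-- The (finite) set of diagonal constraints occurring in guards of `A`. -/
def diagGuards {Q X : Type} [DecidableEq X] (A : TA Q X) : Finset (Constr X) :=
  A.trans.biUnion fun t => (TTrans.grd t).filter fun φ => φ.isDiag

/-! ## Updateable timed automata -/

/-- Atomic update of a clock: `x := c` or `x := y + d`. -/
inductive AtomicUp (X : Type) : Type where
  | const : ℕ → AtomicUp X
  | add : X → ℤ → AtomicUp X
deriving DecidableEq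

/-- `up(v) : X → ℝ` (may be negative). -/
def applyUpd {X : Type} (up : X → AtomicUp X) (v : X → ℝ≥0) : X → ℝ :=
  fun x => match up x with
    | .const c => (c : ℝ)
    | .add y d => (v y : ℝ) + (d : ℝ)

/-- Weakest precondition `wp(⊑_φ, up)` of a single constraint over an update. -/
def wpUpd {X : Type} [DecidableEq X] (up : X → AtomicUp X) : Constr X → Set (Constr X)
  | .upper x o c =>
      match up x with
      | .const _ => ∅
      | .add y d => if 0 ≤ (c : ℤ) - d then {Constr.upper y o ((c : ℤ) - d).toNat} else ∅
  | .lower c o x =>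
      match up x with
      | .const _ => ∅
      | .add y d => if 0 ≤ (c : ℤ) - d then {Constr.lower ((c : ℤ) - d).toNat o y} else ∅
  | .diag x y o c =>
      match up x, up y with
      | .const _, .const _ => ∅
      | .add y₁ d₁, .const c₂ =>
          if 0 ≤ c + (c₂ : ℤ) - d₁ then {Constr.upper y₁ o (c + (c₂ : ℤ) - d₁).toNat} else ∅
      | .const c₁, .add y₂ d₂ =>
          if 0 ≤ (c₁ : ℤ) - d₂ - c then {Constr.lower ((c₁ : ℤ) - d₂ - c).toNat o y₂} else ∅
      | .add y₁ d₁, .add y₂ d₂ =>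
          if y₁ = y₂ then ∅ else {Constr.diag y₁ y₂ o (c - d₁ + d₂)}

/-- Weakest precondition `wp(⊑_G, up)` of a set of constraints over an update. -/
def wpUpdSet {X : Type} [DecidableEq X] (up : X → AtomicUp X) (G : Set (Constr X)) :
    Set (Constr X) :=
  ⋃ φ ∈ G, wpUpd up φ

/-- The set of constraints `{0 ≤ x | x ∈ X}`. -/
def nonnegConstrs (X : Type) : Set (Constr X) := {φ | ∃ x : X, φ = Constr.lower 0 Ineq.le x}

/-- A transition of an updateable timed automaton: source, guard, update, target. -/
abbrev UTrans (Q X : Type) : Type := Q × Finset (Constr X) × (X → AtomicUp X) × Q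

def UTrans.src {Q X : Type} (t : UTrans Q X) : Q := t.1
def UTrans.grd {Q X : Type} (t : UTrans Q X) : Finset (Constr X) := t.2.1
def UTrans.upd {Q X : Type} (t : UTrans Q X) : X → AtomicUp X := t.2.2.1
def UTrans.tgt {Q X : Type} (t : UTrans Q X) : Q := t.2.2.2

/-- An updateable timed automaton. -/
structure UTA (Q X : Type) : Type where
  init : Q
  trans : Finset (UTrans Q X)
  acc : Set Q

/-- Action step of an updateable timed automaton along transition `t`:
the guard holds, `up(v) ≥ 0`, and the new valuation is `up(v)`. -/
def UStep {Q X : Type} (A : UTA Q X) (t : UTrans Q X) (c c' : Q × (X → ℝ≥0)) : Prop :=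
  t ∈ A.trans ∧ UTrans.src t = c.1 ∧ (∀ φ ∈ UTrans.grd t, Constr.sat c.2 φ) ∧
    c'.1 = UTrans.tgt t ∧ ∀ x, (c'.2 x : ℝ) = applyUpd (UTrans.upd t) c.2 x

/-- `r` is a simulation on configurations of an updateable timed automaton. -/
def IsSimulationU {Q X : Type} (A : UTA Q X)
    (r : (Q × (X → ℝ≥0)) → (Q × (X → ℝ≥0)) → Prop) : Prop :=
  Reflexive r ∧ Transitive r ∧
  ∀ q v q' v', r (q, v) (q', v') →
    q = q' ∧
    (∀ δ : ℝ≥0, ∃ δ' : ℝ≥0, r (q, shift v δ) (q, shift v' δ')) ∧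
    (∀ t c₁, UStep A t (q, v) c₁ →
      ∃ v₁', UStep A t (q, v') (c₁.1, v₁') ∧ r c₁ (c₁.1, v₁'))

/-- State-based guard equations for updateable timed automata. -/
def GuardEqU {Q X : Type} [DecidableEq X] (A : UTA Q X) (G : Q → Set (Constr X)) : Prop :=
  ∀ q, G q = ⋃ t ∈ A.trans, ⋃ (_ : UTrans.src t = q),
    ((UTrans.grd t : Set (Constr X)) ∪ wpUpdSet (UTrans.upd t) (nonnegConstrs X)
      ∪ wpUpdSet (UTrans.upd t) (G (UTrans.tgt t)))

/-- Kleene iterates `G^i(q)` of the state-based guard equations. -/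
def iterG {Q X : Type} [DecidableEq X] (A : UTA Q X) : ℕ → Q → Set (Constr X)
  | 0 => fun q => ⋃ t ∈ A.trans, ⋃ (_ : UTrans.src t = q),
      ((UTrans.grd t : Set (Constr X)) ∪ wpUpdSet (UTrans.upd t) (nonnegConstrs X))
  | (i + 1) => fun q => iterG A i q ∪
      (⋃ t ∈ A.trans, ⋃ (_ : UTrans.src t = q),
        wpUpdSet (UTrans.upd t) (iterG A i (UTrans.tgt t)))

/-- `G^{i+1}(q)` is coloured red: a new diagonal constraint was added, or a new
non-diagonal constraint whose constant is strictly bigger than the constant of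
every non-diagonal constraint of the same kind on the same clock in `G^i(q)`. -/
def RedAt {Q X : Type} [DecidableEq X] (A : UTA Q X) : ℕ → Q → Prop
  | 0, _ => False
  | (i + 1), q =>
      (∃ φ : Constr X, φ ∈ iterG A (i + 1) q ∧ φ ∉ iterG A i q ∧ φ.isDiag) ∨
      (∃ (x : X) (o : Ineq) (c : ℕ),
        Constr.upper x o c ∈ iterG A (i + 1) q ∧ Constr.upper x o c ∉ iterG A i q ∧
        ∀ (o' : Ineq) (c' : ℕ), Constr.upper x o' c' ∈ iterG A i q → c' < c) ∨
      (∃ (x : X) (o : Ineq) (c : ℕ),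
        Constr.lower c o x ∈ iterG A (i + 1) q ∧ Constr.lower c o x ∉ iterG A i q ∧
        ∀ (o' : Ineq) (c' : ℕ), Constr.lower c' o' x ∈ iterG A i q → c' < c)

/-- `G^i(q)` is coloured green. -/
def GreenAt {Q X : Type} [DecidableEq X] (A : UTA Q X) (i : ℕ) (q : Q) : Prop :=
  ¬ RedAt A i q

/-- Absolute value of the constant of an atomic update. -/
def updBound {X : Type} : AtomicUp X → ℕ
  | .const c => c
  | .add _ d => d.natAbs

/-! ## The statement -/

/-!
The automaton `A_df` remembers in its state the truth values of the diagonal constraints of `A`.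
A delay preserves them. Under a reset, the constraint `x - y ◁ d` keeps its truth value if neither
clock is reset, gets a fixed one if both are, and if exactly one is reset then it becomes a bound
on the other clock. A copy of a transition can thus guess the next truth values and check the guess
with non-diagonal constraints.

Two transitions that differ only in diagonal constraints might have the same copies, and then the
run bijection would fail. Every transition `t` therefore gets its own threshold `n`, at least as
large as all constants in the guards of its copies, and each copy is split further into one with
`x ≤ n` and one with `n < x`, for a fixed clock `x`. Exactly one of the two can be taken, and `t`
is recovered from either as the transition whose threshold is the largest constant of the guard.
-/

/-! ### Negation of constraints -/

/-- The comparison `▷` for which `b ▷ a` is the negation of `a ◁ b`. -/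
def Ineq.dual : Ineq → Ineq
  | .lt => .le
  | .le => .lt

theorem Ineq.holds_dual {o : Ineq} {a b : ℝ} : o.dual.holds b a ↔ ¬ o.holds a b := by
  cases o <;> simp [Ineq.dual, Ineq.holds]

theorem Ineq.holds_of_lt {o : Ineq} {a b : ℝ} (h : a < b) : o.holds a b := by
  cases o
  · exact h
  · exact h.le

theorem Ineq.holds_neg_comm {o : Ineq} {a b : ℝ} : o.holds (-a) b ↔ o.holds (-b) a := by
  cases o
  · exact neg_lt
  · exact neg_le

namespace Constr

variable {X : Type}

/-- The negation of an atomic constraint, which is again atomic. -/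
def neg : Constr X → Constr X
  | .upper x o c => .lower c o.dual x
  | .lower c o x => .upper x o.dual c
  | .diag x y o d => .diag y x o.dual (-d)

theorem sat_neg (v : X → ℝ≥0) (φ : Constr X) : φ.neg.sat v ↔ ¬ φ.sat v := by
  cases φ with
  | upper => exact Ineq.holds_dual
  | lower => exact Ineq.holds_dual
  | diag x y o d =>
    rw [neg, sat, sat, ← Ineq.holds_dual, Int.cast_neg, ← neg_sub (v x : ℝ) (v y),
      Ineq.holds_neg_comm, neg_neg]

/-- The constraint `φ` with a sign: `φ` itself for `true`, its negation for `false`. -/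
def signed (φ : Constr X) : Bool → Constr X
  | true => φ
  | false => φ.neg

theorem isDiag_signed (φ : Constr X) (b : Bool) : (φ.signed b).isDiag = φ.isDiag := by
  cases b <;> cases φ <;> rfl

open Classical in
theorem sat_signed (v : X → ℝ≥0) (φ : Constr X) (b : Bool) :
    (φ.signed b).sat v ↔ decide (φ.sat v) = b := by
  cases b <;> simp [signed, sat_neg]

theorem sat_shift {φ : Constr X} (hφ : φ.isDiag) (v : X → ℝ≥0) (δ : ℝ≥0) :
    φ.sat (shift v δ) ↔ φ.sat v := by
  cases φ with
  | upper => cases hφ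
  | lower => cases hφ
  | diag => simp [sat, shift]

end Constr

/-! ### Definability by diagonal-free guards -/

section Definability

variable {X : Type}

/-- A property `P` of valuations is definable on `V` by a diagonal-free guard if some conjunction
of non-diagonal constraints is equivalent to `P` for the valuations in `V`. -/
def DiagFreeDefinableOn (V : Set (X → ℝ≥0)) (P : (X → ℝ≥0) → Prop) : Prop :=
  ∃ g : Finset (Constr X), (∀ ψ ∈ g, ¬ ψ.isDiag) ∧ ∀ v ∈ V, (∀ ψ ∈ g, ψ.sat v) ↔ P v

namespace DiagFreeDefinableOn

variable {V : Set (X → ℝ≥0)} {P P' : (X → ℝ≥0) → Prop}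

theorem congr (hP : DiagFreeDefinableOn V P) (h : ∀ v ∈ V, P v ↔ P' v) :
    DiagFreeDefinableOn V P' := by
  obtain ⟨g, hg, hgP⟩ := hP
  exact ⟨g, hg, fun v hv => (hgP v hv).trans (h v hv)⟩

theorem sat_of_not_isDiag {φ : Constr X} (hφ : ¬ φ.isDiag) :
    DiagFreeDefinableOn V fun v => φ.sat v :=
  ⟨{φ}, by simpa using hφ, by simp⟩

theorem const [Nonempty X] (p : Prop) : DiagFreeDefinableOn V fun _ => p := by
  by_cases hp : p
  · exact ⟨∅, by simp, by simp [hp]⟩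
  · let x : X := Classical.arbitrary X
    refine (sat_of_not_isDiag (φ := .upper x .lt 0) (by simp [Constr.isDiag])).congr fun v _ => ?_
    simp [Constr.sat, Ineq.holds, hp]

theorem and (hP : DiagFreeDefinableOn V P) (hP' : DiagFreeDefinableOn V P') :
    DiagFreeDefinableOn V fun v => P v ∧ P' v := by
  classical
  obtain ⟨g, hg, hgP⟩ := hP
  obtain ⟨g', hg', hgP'⟩ := hP'
  refine ⟨g ∪ g', Finset.forall_mem_union.2 ⟨hg, hg'⟩, fun v hv => ?_⟩
  rw [Finset.forall_mem_union, hgP v hv, hgP' v hv]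

theorem forall_mem {ι : Type*} {s : Finset ι} {F : ι → (X → ℝ≥0) → Prop}
    (h : ∀ i ∈ s, DiagFreeDefinableOn V (F i)) :
    DiagFreeDefinableOn V fun v => ∀ i ∈ s, F i v := by
  classical
  induction s using Finset.induction_on with
  | empty => exact ⟨∅, by simp, by simp⟩
  | insert i s _ ih =>
    obtain ⟨hi, hs⟩ := (Finset.forall_mem_insert ..).1 h
    exact (hi.and (ih hs)).congr fun v _ => (Finset.forall_mem_insert i s (F · v)).symm

theorem forall_finite {ι : Type*} [Finite ι] {F : ι → (X → ℝ≥0) → Prop}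
    (h : ∀ i, DiagFreeDefinableOn V (F i)) : DiagFreeDefinableOn V fun v => ∀ i, F i v := by
  have := Fintype.ofFinite ι
  exact (forall_mem (s := Finset.univ) fun i _ => h i).congr fun v _ => by simp

variable [Nonempty X]

theorem holds_clock_intCast (x : X) (o : Ineq) (d : ℤ) :
    DiagFreeDefinableOn V fun v => o.holds (v x) d := by
  obtain hd | hd := lt_or_ge d 0
  · refine (const False).congr fun v _ => iff_of_false id (Ineq.holds_dual.1 ?_)
    exact Ineq.holds_of_lt ((Int.cast_lt_zero.2 hd).trans_le (v x).coe_nonneg)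
  · lift d to ℕ using hd
    exact sat_of_not_isDiag (φ := .upper x o d) (by simp [Constr.isDiag])

theorem holds_intCast_clock (d : ℤ) (o : Ineq) (x : X) :
    DiagFreeDefinableOn V fun v => o.holds d (v x) := by
  obtain hd | hd := lt_or_ge d 0
  · refine (const True).congr fun v _ => iff_of_true trivial ?_
    exact Ineq.holds_of_lt ((Int.cast_lt_zero.2 hd).trans_le (v x).coe_nonneg)
  · lift d to ℕ using hd
    exact sat_of_not_isDiag (φ := .lower d o x) (by simp [Constr.isDiag])

theorem sat_reset {φ : Constr X} (hφ : DiagFreeDefinableOn V fun v => φ.sat v) (R : Set X) :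
    DiagFreeDefinableOn V fun v => φ.sat (reset R v) := by
  cases φ with
  | upper x o c =>
    by_cases hx : x ∈ R
    · exact (const (o.holds 0 c)).congr fun v _ => by simp [Constr.sat, reset, hx]
    · exact hφ.congr fun v _ => by simp [Constr.sat, reset, hx]
  | lower c o x =>
    by_cases hx : x ∈ R
    · exact (const (o.holds c 0)).congr fun v _ => by simp [Constr.sat, reset, hx]
    · exact hφ.congr fun v _ => by simp [Constr.sat, reset, hx]
  | diag x y o d =>
    by_cases hx : x ∈ R <;> by_cases hy : y ∈ R
    · exact (const (o.holds 0 d)).congr fun v _ => by simp [Constr.sat, reset, hx, hy]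
    · exact (holds_intCast_clock (-d) o y).congr fun v _ => by
        simp [Constr.sat, reset, hx, hy, Ineq.holds_neg_comm (a := d)]
    · exact (holds_clock_intCast x o d).congr fun v _ => by simp [Constr.sat, reset, hx, hy]
    · exact hφ.congr fun v _ => by simp [Constr.sat, reset, hx, hy]

end DiagFreeDefinableOn

end Definability

/-! ### Step covers -/

namespace TA

/-- The delay-action steps of `A` available in the configuration `c`. -/
def enabled {Q X : Type} (A : TA Q X) (c : Q × (X → ℝ≥0)) : Set (ℝ≥0 × TTrans Q X) :=
  {s | s.2 ∈ A.trans ∧ s.2.src = c.1 ∧ ∀ φ ∈ s.2.grd, φ.sat (shift c.2 s.1)}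

end TA

/-- The configuration reached from `c` by the delay-action step `s`. -/
noncomputable def nextConfig {Q X : Type} (c : Q × (X → ℝ≥0)) (s : ℝ≥0 × TTrans Q X) :
    Q × (X → ℝ≥0) :=
  (s.2.tgt, reset s.2.rst (shift c.2 s.1))

theorem stepsFrom_cons {Q X : Type} {A : TA Q X} {c : Q × (X → ℝ≥0)} {s : ℝ≥0 × TTrans Q X}
    {l : List (ℝ≥0 × TTrans Q X)} :
    stepsFrom A c (s :: l) ↔ s ∈ A.enabled c ∧ stepsFrom A (nextConfig c s) l := by
  simp only [stepsFrom, TA.enabled, nextConfig, Set.mem_ofPred_eq, and_assoc]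

/-- Along the map `γ` of configurations, the steps of `A'` from `γ c` correspond bijectively under
`π` to the steps of `A` from `c`, and corresponding steps lead to configurations that again
correspond under `γ`. -/
structure IsStepCover {Q Q' X X' : Type} (A : TA Q X) (A' : TA Q' X')
    (γ : Q × (X → ℝ≥0) → Q' × (X' → ℝ≥0))
    (π : ℝ≥0 × TTrans Q' X' → ℝ≥0 × TTrans Q X) : Prop where
  bijOn_enabled (c) : Set.BijOn π (A'.enabled (γ c)) (A.enabled c)
  nextConfig_eq (c) : ∀ s ∈ A'.enabled (γ c), nextConfig (γ c) s = γ (nextConfig c (π s))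

namespace IsStepCover

variable {Q Q' X X' : Type} {A : TA Q X} {A' : TA Q' X'}
  {γ : Q × (X → ℝ≥0) → Q' × (X' → ℝ≥0)} {π : ℝ≥0 × TTrans Q' X' → ℝ≥0 × TTrans Q X}

theorem mapsTo_stepsFrom (h : IsStepCover A A' γ π) (c : Q × (X → ℝ≥0)) :
    Set.MapsTo (List.map π) {l | stepsFrom A' (γ c) l} {l | stepsFrom A c l} := by
  intro l hl
  induction l generalizing c with
  | nil => trivial
  | cons s l ih =>
    obtain ⟨hs, hl⟩ := stepsFrom_cons.1 hl
    rw [h.nextConfig_eq c s hs] at hl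
    exact stepsFrom_cons.2 ⟨(h.bijOn_enabled c).mapsTo hs, ih _ hl⟩

theorem injOn_stepsFrom (h : IsStepCover A A' γ π) (c : Q × (X → ℝ≥0)) :
    Set.InjOn (List.map π) {l | stepsFrom A' (γ c) l} := by
  intro l₁ hl₁ l₂ hl₂ heq
  induction l₁ generalizing c l₂ with
  | nil => exact (List.map_eq_nil_iff.1 heq.symm).symm
  | cons s₁ l₁ ih =>
    obtain ⟨s₂, l₂, rfl, hs, hl⟩ := List.map_eq_cons_iff.1 heq.symm
    obtain ⟨hs₁, hl₁⟩ := stepsFrom_cons.1 hl₁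
    obtain ⟨hs₂, hl₂⟩ := stepsFrom_cons.1 hl₂
    obtain rfl := (h.bijOn_enabled c).injOn hs₂ hs₁ hs
    rw [h.nextConfig_eq c s₂ hs₂] at hl₁ hl₂
    rw [ih _ hl₁ hl₂ hl.symm]

theorem surjOn_stepsFrom (h : IsStepCover A A' γ π) (c : Q × (X → ℝ≥0)) :
    Set.SurjOn (List.map π) {l | stepsFrom A' (γ c) l} {l | stepsFrom A c l} := by
  intro l hl
  induction l generalizing c with
  | nil => exact ⟨[], trivial, rfl⟩
  | cons s l ih =>
    obtain ⟨hs, hl⟩ := stepsFrom_cons.1 hl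
    obtain ⟨s', hs', rfl⟩ := (h.bijOn_enabled c).surjOn hs
    obtain ⟨l', hl', rfl⟩ := ih _ hl
    rw [Set.mem_ofPred_eq, ← h.nextConfig_eq c s' hs'] at hl'
    exact ⟨s' :: l', stepsFrom_cons.2 ⟨hs', hl'⟩, rfl⟩

theorem bijOn_stepsFrom (h : IsStepCover A A' γ π) (c : Q × (X → ℝ≥0)) :
    Set.BijOn (List.map π) {l | stepsFrom A' (γ c) l} {l | stepsFrom A c l} :=
  ⟨h.mapsTo_stepsFrom c, h.injOn_stepsFrom c, h.surjOn_stepsFrom c⟩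

theorem endConfig_eq (h : IsStepCover A A' γ π) {c : Q × (X → ℝ≥0)}
    {l : List (ℝ≥0 × TTrans Q' X')} (hl : stepsFrom A' (γ c) l) :
    endConfig (γ c) l = γ (endConfig c (l.map π)) := by
  induction l generalizing c with
  | nil => rfl
  | cons s l ih =>
    obtain ⟨hs, hl⟩ := stepsFrom_cons.1 hl
    rw [h.nextConfig_eq c s hs] at hl
    calc endConfig (γ c) (s :: l) = endConfig (nextConfig (γ c) s) l := rfl
      _ = endConfig (γ (nextConfig c (π s))) l := by rw [h.nextConfig_eq c s hs]
      _ = γ (endConfig (nextConfig c (π s)) (l.map π)) := ih hl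

theorem exists_run_equiv (h : IsStepCover A A' γ π)
    (hinit : γ (A.init, fun _ => 0) = (A'.init, fun _ => 0))
    (hacc : ∀ c, (γ c).1 ∈ A'.acc ↔ c.1 ∈ A.acc) :
    ∃ e : A.Run ≃ A'.Run, ∀ r, A.Accepting r ↔ A'.Accepting (e r) := by
  have hbij := h.bijOn_stepsFrom (A.init, fun _ => 0)
  have hend (l) (hl : stepsFrom A' (γ (A.init, fun _ => 0)) l) := h.endConfig_eq hl
  rw [hinit] at hbij hend
  let e : A'.Run ≃ A.Run := hbij.equiv
  have accepting_iff (r : A'.Run) : A'.Accepting r ↔ A.Accepting (e r) := by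
    rw [TA.Accepting, hend _ r.2, hacc]
    rfl
  exact ⟨e.symm, fun r => by rw [accepting_iff, e.apply_symm_apply]⟩

end IsStepCover

/-! ### The diagonal-free automaton -/

theorem exists_injective_nat_ge {α : Type*} [Finite α] (N : α → ℕ) :
    ∃ f : α → ℕ, Function.Injective f ∧ ∀ a, N a ≤ f a := by
  obtain ⟨e, he⟩ := exists_injective_nat α
  obtain ⟨M, hM⟩ := (Set.finite_range N).bddAbove
  exact ⟨fun a => M + e a, fun a b hab => he (Nat.add_left_cancel hab),
    fun a => (hM (Set.mem_range_self a)).trans (Nat.le_add_right M _)⟩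

/-- The largest absolute value of a constant occurring in a guard (`0` for the empty guard). -/
def maxConst {X : Type} (g : Finset (Constr X)) : ℕ := g.sup fun φ => φ.constOf.natAbs

namespace TA

variable {Q X : Type} [DecidableEq X] (A : TA Q X)

/-- The truth assignments to the diagonal constraints of `A`, the second component of the states
of the diagonal-free automaton. -/
abbrev DiagAssignment : Type := diagGuards A → Bool

open Classical in
/-- The truth values of the diagonal constraints of `A` under the valuation `v`. -/
noncomputable def diagAssignment (v : X → ℝ≥0) : A.DiagAssignment := fun φ => decide (φ.1.sat v)

variable {A} in
theorem mem_diagGuards {φ : Constr X} :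
    φ ∈ diagGuards A ↔ ∃ t ∈ A.trans, φ ∈ t.grd ∧ φ.isDiag := by
  simp only [diagGuards, Finset.mem_biUnion, Finset.mem_filter]

variable {A} in
theorem isDiag_of_mem_diagGuards {φ : Constr X} (hφ : φ ∈ diagGuards A) : φ.isDiag := by
  obtain ⟨_, _, _, h⟩ := mem_diagGuards.1 hφ
  exact h

theorem diagAssignment_shift (v : X → ℝ≥0) (δ : ℝ≥0) :
    A.diagAssignment (shift v δ) = A.diagAssignment v := by
  funext φ
  exact decide_eq_decide.2 (Constr.sat_shift (isDiag_of_mem_diagGuards φ.2) v δ)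

theorem diagAssignment_eq_iff (v : X → ℝ≥0) (S : A.DiagAssignment) :
    A.diagAssignment v = S ↔ ∀ φ : diagGuards A, (φ.1.signed (S φ)).sat v := by
  simp only [funext_iff, diagAssignment, Constr.sat_signed]

variable [Nonempty X]

theorem diagFreeDefinableOn_sat_signed (S : A.DiagAssignment) (φ : diagGuards A) (b : Bool) :
    DiagFreeDefinableOn {v | A.diagAssignment v = S} fun v => (φ.1.signed b).sat v :=
  (DiagFreeDefinableOn.const (S φ = b)).congr <| by
    rintro v rfl
    exact (Constr.sat_signed v φ b).symm

theorem diagFreeDefinableOn_grd (t : A.trans) (S : A.DiagAssignment) :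
    DiagFreeDefinableOn {v | A.diagAssignment v = S} fun v => ∀ φ ∈ t.1.grd, φ.sat v := by
  refine .forall_mem fun φ hφ => ?_
  by_cases hd : φ.isDiag
  · exact A.diagFreeDefinableOn_sat_signed S ⟨φ, mem_diagGuards.2 ⟨t, t.2, hφ, hd⟩⟩ true
  · exact .sat_of_not_isDiag hd

theorem diagFreeDefinableOn_diagAssignment_reset (R : Set X) (S S' : A.DiagAssignment) :
    DiagFreeDefinableOn {v | A.diagAssignment v = S}
      fun v => A.diagAssignment (reset R v) = S' := by
  simp only [diagAssignment_eq_iff _ _ S']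
  exact .forall_finite fun φ => (A.diagFreeDefinableOn_sat_signed S φ (S' φ)).sat_reset R

theorem diagFreeDefinableOn_step (t : A.trans) (S S' : A.DiagAssignment) :
    DiagFreeDefinableOn {v | A.diagAssignment v = S} fun v =>
      (∀ φ ∈ t.1.grd, φ.sat v) ∧ A.diagAssignment (reset t.1.rst v) = S' :=
  (A.diagFreeDefinableOn_grd t S).and (A.diagFreeDefinableOn_diagAssignment_reset t.1.rst S S')

/-- A diagonal-free guard expressing, for valuations with assignment `S`, that `t` can be taken and
that the assignment after its reset is `S'`. -/
noncomputable def stepGuard (t : A.trans) (S S' : A.DiagAssignment) : Finset (Constr X) :=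
  (A.diagFreeDefinableOn_step t S S').choose

theorem not_isDiag_of_mem_stepGuard {t : A.trans} {S S' : A.DiagAssignment} {ψ : Constr X}
    (hψ : ψ ∈ A.stepGuard t S S') : ¬ ψ.isDiag :=
  (A.diagFreeDefinableOn_step t S S').choose_spec.1 ψ hψ

theorem sat_stepGuard_iff (t : A.trans) (S' : A.DiagAssignment) (v : X → ℝ≥0) :
    (∀ ψ ∈ A.stepGuard t (A.diagAssignment v) S', ψ.sat v) ↔
      (∀ φ ∈ t.1.grd, φ.sat v) ∧ A.diagAssignment (reset t.1.rst v) = S' :=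
  (A.diagFreeDefinableOn_step t _ S').choose_spec.2 v rfl

theorem exists_threshold : ∃ n : A.trans → ℕ, Function.Injective n ∧
    ∀ t, (Finset.univ.sup fun p : A.DiagAssignment × A.DiagAssignment =>
      maxConst (A.stepGuard t p.1 p.2)) ≤ n t :=
  exists_injective_nat_ge _

/-- A number identifying the transition `t`, bounding the constants of all its step guards. -/
noncomputable def threshold : A.trans → ℕ := A.exists_threshold.choose

theorem threshold_injective : Function.Injective A.threshold := A.exists_threshold.choose_spec.1

theorem maxConst_stepGuard_le (t : A.trans) (S S' : A.DiagAssignment) :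
    maxConst (A.stepGuard t S S') ≤ A.threshold t :=
  (Finset.le_sup (f := fun p : A.DiagAssignment × A.DiagAssignment =>
    maxConst (A.stepGuard t p.1 p.2)) (Finset.mem_univ (S, S'))).trans
      (A.exists_threshold.choose_spec.2 t)

/-- The constraint `x ≤ n` on a fixed clock `x`, where `n` is the threshold of `t`. -/
noncomputable def thresholdConstr (t : A.trans) : Constr X :=
  .upper (Classical.arbitrary X) .le (A.threshold t)

/-- The indices of the copies in `A_df` of transitions of `A`: a transition, the assignments before
and after it, and whether it is taken below its threshold. -/
abbrev CopyIndex : Type := A.trans × A.DiagAssignment × A.DiagAssignment × Bool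

/-- The copy of the transition `t` that starts with the assignment `S`, ends with the assignment
`S'`, and is taken below (`b = true`) or above (`b = false`) the threshold of `t`. -/
noncomputable def copyTrans : A.CopyIndex → TTrans (Q × A.DiagAssignment) X
  | (t, S, S', b) => ((t.1.src, S), insert ((A.thresholdConstr t).signed b) (A.stepGuard t S S'),
      t.1.rst, (t.1.tgt, S'))

theorem maxConst_grd_copyTrans (i : A.CopyIndex) :
    maxConst (A.copyTrans i).grd = A.threshold i.1 := by
  obtain ⟨t, S, S', b⟩ := i
  have hb : ((A.thresholdConstr t).signed b).constOf.natAbs = A.threshold t := by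
    cases b <;> rfl
  rw [maxConst, copyTrans, TTrans.grd, Finset.sup_insert, hb]
  exact sup_eq_left.2 (A.maxConst_stepGuard_le t S S')

theorem exists_map_copyTrans_eq :
    ∃ π : TTrans (Q × A.DiagAssignment) X → TTrans Q X, ∀ i, π (A.copyTrans i) = i.1 := by
  have hfactors : Function.FactorsThrough
      (fun i : A.CopyIndex => (i.1 : TTrans Q X))
      A.copyTrans := fun i j hij => congrArg Subtype.val <| A.threshold_injective <| by
    rw [← maxConst_grd_copyTrans, ← maxConst_grd_copyTrans, hij]
  have : Nonempty (TTrans Q X) := ⟨(A.init, ∅, ∅, A.init)⟩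
  obtain ⟨π, hπ⟩ := (Function.factorsThrough_iff _).1 hfactors
  exact ⟨π, fun i => (congrFun hπ i).symm⟩

open Classical in
/-- The diagonal-free automaton `A_df`. -/
noncomputable def toDiagFree : TA (Q × A.DiagAssignment) X where
  init := (A.init, A.diagAssignment fun _ => 0)
  trans := Finset.univ.image A.copyTrans
  acc := {q | q.1 ∈ A.acc}

theorem mem_trans_toDiagFree {u : TTrans (Q × A.DiagAssignment) X} :
    u ∈ A.toDiagFree.trans ↔ ∃ i, A.copyTrans i = u := by
  classical
  simp [toDiagFree]

theorem diagFree_toDiagFree : DiagFree A.toDiagFree := by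
  intro u hu φ hφ
  obtain ⟨⟨t, S, S', b⟩, rfl⟩ := A.mem_trans_toDiagFree.1 hu
  obtain rfl | hφ := Finset.mem_insert.1 hφ
  · rw [Constr.isDiag_signed]
    exact Bool.false_ne_true
  · exact A.not_isDiag_of_mem_stepGuard hφ

/-- The configuration of `A_df` that corresponds to a configuration of `A`. -/
noncomputable def liftConfig (c : Q × (X → ℝ≥0)) : (Q × A.DiagAssignment) × (X → ℝ≥0) :=
  ((c.1, A.diagAssignment c.2), c.2)

open Classical in
/-- The copy of `t` that `A_df` takes where `A` takes `t` from `c` after the delay `δ`. -/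
noncomputable def takenCopy (c : Q × (X → ℝ≥0)) (δ : ℝ≥0) (t : A.trans) : A.CopyIndex :=
  (t, A.diagAssignment c.2, A.diagAssignment (nextConfig c (δ, t.1)).2,
    decide ((A.thresholdConstr t).sat (shift c.2 δ)))

theorem copyTrans_mem_enabled_iff (c : Q × (X → ℝ≥0)) (δ : ℝ≥0) (i : A.CopyIndex) :
    (δ, A.copyTrans i) ∈ A.toDiagFree.enabled (A.liftConfig c) ↔
      (δ, i.1.1) ∈ A.enabled c ∧ A.takenCopy c δ i.1 = i := by
  classical
  obtain ⟨t, S, S', b⟩ := i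
  have hmem : A.copyTrans (t, S, S', b) ∈ A.toDiagFree.trans :=
    A.mem_trans_toDiagFree.2 ⟨_, rfl⟩
  have hsrc : (A.copyTrans (t, S, S', b)).src = (A.liftConfig c).1 ↔
      t.1.src = c.1 ∧ S = A.diagAssignment c.2 := Prod.ext_iff
  have hgrd : A.diagAssignment c.2 = S →
      ((∀ φ ∈ (A.copyTrans (t, S, S', b)).grd, φ.sat (shift c.2 δ)) ↔
        decide ((A.thresholdConstr t).sat (shift c.2 δ)) = b ∧
          (∀ φ ∈ t.1.grd, φ.sat (shift c.2 δ)) ∧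
            A.diagAssignment (nextConfig c (δ, t.1)).2 = S') := by
    rintro rfl
    rw [copyTrans, TTrans.grd, Finset.forall_mem_insert, Constr.sat_signed,
      ← A.diagAssignment_shift c.2 δ, sat_stepGuard_iff]
    rfl
  simp only [enabled, takenCopy, Set.mem_ofPred_eq, Prod.mk.injEq, hmem, hsrc, t.2, true_and,
    eq_comm (a := S)]
  tauto

theorem mem_enabled_toDiagFree_iff {c : Q × (X → ℝ≥0)}
    {s : ℝ≥0 × TTrans (Q × A.DiagAssignment) X} :
    s ∈ A.toDiagFree.enabled (A.liftConfig c) ↔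
      ∃ (δ : ℝ≥0) (t : A.trans),
        (δ, t.1) ∈ A.enabled c ∧ (δ, A.copyTrans (A.takenCopy c δ t)) = s := by
  constructor
  · intro hs
    obtain ⟨δ, u⟩ := s
    obtain ⟨i, rfl⟩ := A.mem_trans_toDiagFree.1 hs.1
    obtain ⟨hi, hcopy⟩ := (A.copyTrans_mem_enabled_iff c δ i).1 hs
    exact ⟨δ, i.1, hi, by rw [hcopy]⟩
  · rintro ⟨δ, t, ht, rfl⟩
    exact (A.copyTrans_mem_enabled_iff c δ _).2 ⟨ht, rfl⟩

theorem exists_isStepCover_toDiagFree : ∃ π, IsStepCover A A.toDiagFree A.liftConfig π := by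
  obtain ⟨π, hπ⟩ := A.exists_map_copyTrans_eq
  have hπ_taken (c δ t) :
      Prod.map id π (δ, A.copyTrans (A.takenCopy c δ t)) = (δ, (t : TTrans Q X)) :=
    congrArg (Prod.mk δ) (hπ _)
  refine ⟨Prod.map id π, fun c => ⟨?mapsTo, ?injOn, ?surjOn⟩, ?nextConfig⟩
  case mapsTo =>
    intro s hs
    obtain ⟨δ, t, ht, rfl⟩ := A.mem_enabled_toDiagFree_iff.1 hs
    rwa [hπ_taken]
  case injOn =>
    intro s hs s' hs' heq
    obtain ⟨δ, t, -, rfl⟩ := A.mem_enabled_toDiagFree_iff.1 hs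
    obtain ⟨δ', t', -, rfl⟩ := A.mem_enabled_toDiagFree_iff.1 hs'
    rw [hπ_taken, hπ_taken, Prod.mk.injEq] at heq
    obtain rfl := heq.1
    rw [Subtype.ext heq.2]
  case surjOn =>
    rintro ⟨δ, t⟩ ht
    exact ⟨_, A.mem_enabled_toDiagFree_iff.2 ⟨δ, ⟨t, ht.1⟩, ht, rfl⟩, hπ_taken ..⟩
  case nextConfig =>
    intro c s hs
    obtain ⟨δ, t, -, rfl⟩ := A.mem_enabled_toDiagFree_iff.1 hs
    rw [hπ_taken]
    rfl

end TA

theorem stmt10_general {Q X : Type} [DecidableEq X] (A : TA Q X) :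
    ∃ (Q' : Type) (_ : Q' ≃ Q × (diagGuards A → Bool)) (A' : TA Q' X),
      DiagFree A' ∧ ∃ e : A.Run ≃ A'.Run, ∀ r : A.Run, A.Accepting r ↔ A'.Accepting (e r) := by
  obtain hX | hX := isEmpty_or_nonempty X
  · have : IsEmpty (Constr X) := ⟨fun φ => by cases φ <;> exact hX.elim ‹X›⟩
    have : IsEmpty (diagGuards A) := Subtype.isEmpty_of_false fun φ => isEmptyElim φ
    exact ⟨Q, (Equiv.prodUnique Q _).symm, A, fun _ _ φ => isEmptyElim φ, .refl _, fun _ => .rfl⟩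
  · obtain ⟨π, hπ⟩ := A.exists_isStepCover_toDiagFree
    exact ⟨_, .refl _, A.toDiagFree, A.diagFree_toDiagFree,
      hπ.exists_run_equiv rfl fun _ => Iff.rfl⟩

theorem stmt10 {Q X : Type} [Fintype Q] [Fintype X] [DecidableEq X] (A : TA Q X) :
    ∃ (Q' : Type) (_ : Fintype Q') (A' : TA Q' X),
      DiagFree A' ∧
      Nat.card Q' = 2 ^ (diagGuards A).card * Nat.card Q ∧
      ∃ e : A.Run ≃ A'.Run, ∀ r : A.Run, A.Accepting r ↔ A'.Accepting (e r) := by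
  obtain ⟨Q', σ, A', hA', he⟩ := stmt10_general A
  exact ⟨Q', .ofEquiv _ σ.symm, A', hA', by simp [Nat.card_congr σ, mul_comm], he⟩
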